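/- arXiv:2109.11578 — 2 statements merged into one kernel-verified Lean document; each statement's English description precedes it below -/
import Mathlib

section
/- Let (N, Ñ) be infinitesimal automorphisms of (H, H̃, S), and let W^N and W^Ñ be the weight filtrations of N and Ñ. Then for every i ∈ ℤ, the orthogonal complement of W^N_i with respect to S equals W^Ñ_{−i−1}, i.e. (W^N_i)^⊥ = W^{Ñ}_{−i−1}. -/
namespace Paper

/-! ### Bilinear pairings between two spaces -/

/-- A bilinear pairing between two complex vector spaces is non-degenerate. -/
def Nondeg {M₁ M₂ : Type*} [AddCommGroup M₁] [Module ℂ M₁] [AddCommGroup M₂] [Module ℂ M₂]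
    (S : M₁ →ₗ[ℂ] M₂ →ₗ[ℂ] ℂ) : Prop :=
  (∀ x : M₁, (∀ y : M₂, S x y = 0) → x = 0) ∧ (∀ y : M₂, (∀ x : M₁, S x y = 0) → y = 0)

/-- The orthogonal complement in `M₂` of a subspace `p ⊆ M₁`, with respect to a
bilinear pairing `S : M₁ × M₂ → ℂ`. -/
def rightOrtho {M₁ M₂ : Type*} [AddCommGroup M₁] [Module ℂ M₁] [AddCommGroup M₂] [Module ℂ M₂]
    (S : M₁ →ₗ[ℂ] M₂ →ₗ[ℂ] ℂ) (p : Submodule ℂ M₁) : Submodule ℂ M₂ where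
  carrier := {y | ∀ x ∈ p, S x y = 0}
  add_mem' := by
    intro a b ha hb x hx
    rw [map_add, ha x hx, hb x hx, add_zero]
  zero_mem' := by
    intro x hx
    simp
  smul_mem' := by
    intro c y hy x hx
    rw [map_smul, hy x hx, smul_zero]

/-- The orthogonal complement in `M₁` of a subspace `q ⊆ M₂`, with respect to a
bilinear pairing `S : M₁ × M₂ → ℂ`. -/
def leftOrtho {M₁ M₂ : Type*} [AddCommGroup M₁] [Module ℂ M₁] [AddCommGroup M₂] [Module ℂ M₂]
    (S : M₁ →ₗ[ℂ] M₂ →ₗ[ℂ] ℂ) (q : Submodule ℂ M₂) : Submodule ℂ M₁ where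
  carrier := {x | ∀ y ∈ q, S x y = 0}
  add_mem' := by
    intro a b ha hb y hy
    simp [map_add, ha y hy, hb y hy]
  zero_mem' := by
    intro y hy
    simp
  smul_mem' := by
    intro c x hx y hy
    simp [map_smul, hx y hy]

/-! ### Graded quotients -/

/-- The quotient of a subspace `p` by (the trace of) a subspace `q`. -/
abbrev GrQ {M : Type*} [AddCommGroup M] [Module ℂ M] (p q : Submodule ℂ M) :=
  p ⧸ Submodule.comap p.subtype q

/-- The map induced on the quotients `p/q → p'/q'` by a linear map sending `p` into `p'`
and `q` into `q'`. -/
def inducedQuot {M₁ M₂ : Type*} [AddCommGroup M₁] [Module ℂ M₁] [AddCommGroup M₂] [Module ℂ M₂]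
    (f : M₁ →ₗ[ℂ] M₂) (p q : Submodule ℂ M₁) (p' q' : Submodule ℂ M₂)
    (h1 : p ≤ Submodule.comap f p') (h2 : q ≤ Submodule.comap f q') :
    GrQ p q →ₗ[ℂ] GrQ p' q' :=
  Submodule.mapQ _ _ (f.restrict fun x hx => Submodule.mem_comap.mp (h1 hx))
    (by
      intro x hx
      simp only [Submodule.mem_comap, Submodule.subtype_apply] at hx ⊢
      have hfx : f (x : M₁) ∈ q' := Submodule.mem_comap.mp (h2 hx)
      simpa [LinearMap.restrict_apply] using hfx)

variable {H : Type*} [AddCommGroup H] [Module ℂ H]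

/-! ### Weight filtrations -/

/-- `W` is the weight filtration of the nilpotent endomorphism `N`: an increasing filtration,
equal to `0` for small indices and to the whole space for large indices, such that
`N (W i) ⊆ W (i - 2)` and such that for every `i ≥ 0` the map `Gr_i → Gr_{-i}` induced
by `N ^ i` on the graded pieces `Gr_i = W i / W (i-1)` is an isomorphism. -/
structure IsWeightFiltration (N : Module.End ℂ H) (W : ℤ → Submodule ℂ H) : Prop where
  mono : Monotone W
  eventually_bot : ∃ a : ℤ, ∀ i ≤ a, W i = ⊥
  eventually_top : ∃ b : ℤ, ∀ i : ℤ, b ≤ i → W i = ⊤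
  map_le : ∀ i : ℤ, W i ≤ Submodule.comap N (W (i - 2))
  gr_bijective : ∀ i : ℕ,
    ∀ (h1 : W (i : ℤ) ≤ Submodule.comap (N ^ i) (W (-(i : ℤ))))
      (h2 : W ((i : ℤ) - 1) ≤ Submodule.comap (N ^ i) (W (-(i : ℤ) - 1))),
      Function.Bijective
        (inducedQuot (N ^ i) (W (i : ℤ)) (W ((i : ℤ) - 1)) (W (-(i : ℤ))) (W (-(i : ℤ) - 1))
          h1 h2)

section aux

theorem IsWeightFiltration.pow_mem {N : Module.End ℂ H} {W : ℤ → Submodule ℂ H}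
    (hW : IsWeightFiltration N W) (k : ℕ) (i j : ℤ) (hj : i - 2 * k ≤ j) {x : H} (hx : x ∈ W i) :
    (N ^ k) x ∈ W j := by
  refine hW.mono hj ?_
  clear hj
  induction k with
  | zero => simpa using hx
  | succ k ih =>
    rw [pow_succ', Module.End.mul_apply]
    have := hW.map_le _ ih
    rw [Submodule.mem_comap] at this
    convert this using 2
    push_cast; ring

theorem IsWeightFiltration.inj {N : Module.End ℂ H} {W : ℤ → Submodule ℂ H}
    (hW : IsWeightFiltration N W) (i : ℕ) {x : H} (hx : x ∈ W i)
    (h : (N ^ i) x ∈ W (-(i : ℤ) - 1)) : x ∈ W ((i : ℤ) - 1) := by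
  have h1 : W (i : ℤ) ≤ Submodule.comap (N ^ i) (W (-(i : ℤ))) :=
    fun y hy => hW.pow_mem i _ _ (by omega) hy
  have h2 : W ((i : ℤ) - 1) ≤ Submodule.comap (N ^ i) (W (-(i : ℤ) - 1)) :=
    fun y hy => hW.pow_mem i _ _ (by omega) hy
  have hb := (hW.gr_bijective i h1 h2).1
  have h0 := (injective_iff_map_eq_zero _).1 hb (Submodule.Quotient.mk ⟨x, hx⟩) (by
    rw [inducedQuot, Submodule.mapQ_apply, Submodule.Quotient.mk_eq_zero]
    exact h)
  rw [Submodule.Quotient.mk_eq_zero] at h0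
  exact h0

theorem IsWeightFiltration.surj {N : Module.End ℂ H} {W : ℤ → Submodule ℂ H}
    (hW : IsWeightFiltration N W) (i : ℕ) {y : H} (hy : y ∈ W (-(i : ℤ))) :
    ∃ x ∈ W (i : ℤ), (N ^ i) x - y ∈ W (-(i : ℤ) - 1) := by
  have h1 : W (i : ℤ) ≤ Submodule.comap (N ^ i) (W (-(i : ℤ))) :=
    fun y hy => hW.pow_mem i _ _ (by omega) hy
  have h2 : W ((i : ℤ) - 1) ≤ Submodule.comap (N ^ i) (W (-(i : ℤ) - 1)) :=
    fun y hy => hW.pow_mem i _ _ (by omega) hy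
  obtain ⟨q, hq⟩ := (hW.gr_bijective i h1 h2).2 (Submodule.Quotient.mk ⟨y, hy⟩)
  obtain ⟨⟨x, hx⟩, rfl⟩ := Submodule.Quotient.mk_surjective _ q
  rw [inducedQuot, Submodule.mapQ_apply, Submodule.Quotient.eq] at hq
  exact ⟨x, hx, hq⟩

/-- Downward induction in steps of two from large natural numbers. -/
theorem down_two {P : ℕ → Prop} (b : ℕ) (hb : ∀ m, b ≤ m → P m) (h : ∀ m, P (m + 2) → P m)
    (m : ℕ) : P m := by
  have key : ∀ k, P (m + 2 * k) → P m := by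
    intro k
    induction k with
    | zero => simp
    | succ k ih => exact fun hk => ih (h _ hk)
  exact key b (hb _ (by omega))

theorem IsWeightFiltration.lift {N : Module.End ℂ H} {W : ℤ → Submodule ℂ H}
    (hW : IsWeightFiltration N W) (i : ℕ) {y : H} (hy : y ∈ W (-(i : ℤ))) :
    ∃ x ∈ W (i : ℤ), (N ^ i) x = y := by
  obtain ⟨a, ha⟩ := hW.eventually_bot
  have key : ∀ k i : ℕ, (-a).toNat ≤ i + k → ∀ y ∈ W (-(i : ℤ)),
      ∃ x ∈ W (i : ℤ), (N ^ i) x = y := by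
    intro k
    induction k with
    | zero =>
      intro i hi y hy
      rw [ha _ (by omega), Submodule.mem_bot] at hy
      exact ⟨0, zero_mem _, by simp [hy]⟩
    | succ k ih =>
      intro i hi y hy
      obtain ⟨x, hx, hxy⟩ := hW.surj i hy
      obtain ⟨z, hz, hzx⟩ := ih (i + 1) (by omega) ((N ^ i) x - y) (by
        convert hxy using 2; push_cast; ring)
      refine ⟨x - N z, sub_mem hx ?_, ?_⟩
      · have := hW.pow_mem 1 _ (i : ℤ) (by push_cast; omega) hz
        simpa using this
      · rw [pow_succ, Module.End.mul_apply] at hzx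
        rw [map_sub, hzx]; abel
  exact key _ i (Nat.le_add_left _ _) y hy

theorem IsWeightFiltration.mem_of_pow {N : Module.End ℂ H} {W : ℤ → Submodule ℂ H}
    (hW : IsWeightFiltration N W) (i : ℕ) {x : H} (h : (N ^ i) x ∈ W (-(i : ℤ) - 1)) :
    x ∈ W ((i : ℤ) - 1) := by
  obtain ⟨b, hb⟩ := hW.eventually_top
  have key : ∀ k : ℕ, x ∈ W ((i : ℤ) - 1 + k) → x ∈ W ((i : ℤ) - 1) := by
    intro k
    induction k with
    | zero => simp
    | succ k ih =>
      intro hk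
      apply ih
      have h1 := hW.inj (i + k) (x := x) (by convert hk using 2; push_cast; ring) (by
        rw [add_comm, pow_add, Module.End.mul_apply]
        exact hW.pow_mem k _ _ (by push_cast; omega) h)
      convert h1 using 2; push_cast; ring
  refine key (b - i + 1).toNat ?_
  rw [hb _ (by omega)]
  trivial

theorem S_pow {H' : Type*} [AddCommGroup H'] [Module ℂ H'] (S : H →ₗ[ℂ] H' →ₗ[ℂ] ℂ)
    {N : Module.End ℂ H} {N' : Module.End ℂ H'}
    (hNN' : ∀ (a : H) (b : H'), S (N a) b + S a (N' b) = 0) (k : ℕ) (a : H) (b : H') :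
    S ((N ^ k) a) b = (-1) ^ k * S a ((N' ^ k) b) := by
  induction k generalizing b with
  | zero => simp
  | succ k ih =>
    rw [pow_succ' N, pow_succ N', Module.End.mul_apply, Module.End.mul_apply,
      eq_neg_of_add_eq_zero_left (hNN' _ _), ih]
    ring

theorem pair_zero {H' : Type*} [AddCommGroup H'] [Module ℂ H'] (S : H →ₗ[ℂ] H' →ₗ[ℂ] ℂ)
    {N : Module.End ℂ H} {N' : Module.End ℂ H'}
    (hNN' : ∀ (a : H) (b : H'), S (N a) b + S a (N' b) = 0)
    {W : ℤ → Submodule ℂ H} {W' : ℤ → Submodule ℂ H'}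
    (hW : IsWeightFiltration N W) (hW' : IsWeightFiltration N' W') (i : ℤ)
    {x : H} (hx : x ∈ W i) {y : H'} (hy : y ∈ W' (-i - 1)) : S x y = 0 := by
  have step1 : ∀ m : ℕ,
      (∀ x ∈ W (-((m + 2 : ℕ) : ℤ)), ∀ y ∈ W' (((m + 2 : ℕ) : ℤ) - 1), S x y = 0) →
      (∀ x ∈ W (m : ℤ), ∀ y ∈ W' (-(m : ℤ) - 1), S x y = 0) := by
    intro m h x hx y hy
    obtain ⟨w, hw, rfl⟩ := hW'.lift (m + 1) (y := y) (by convert hy using 2; push_cast; ring)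
    have h1 := S_pow S hNN' (m + 1) x w
    rw [h _ (hW.pow_mem (m + 1) _ _ (by push_cast; omega) hx) w
      (hW'.mono (by push_cast; omega) hw)] at h1
    simpa using h1.symm
  have step2 : ∀ m : ℕ, ∀ x ∈ W (-(m : ℤ)), ∀ y ∈ W' ((m : ℤ) - 1), S x y = 0 := by
    obtain ⟨a, ha⟩ := hW.eventually_bot
    intro m
    refine down_two (P := fun m : ℕ => ∀ x ∈ W (-(m : ℤ)), ∀ y ∈ W' ((m : ℤ) - 1), S x y = 0)
      (-a).toNat ?_ ?_ m
    · intro m hm x hx y hy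
      rw [ha _ (by omega), Submodule.mem_bot] at hx
      simp [hx]
    · intro m h x hx y hy
      obtain ⟨z, hz, rfl⟩ := hW.lift m hx
      rw [S_pow S hNN', step1 m h z hz _ (hW'.pow_mem m _ _ (by omega) hy), mul_zero]
  rcases le_total 0 i with hi | hi
  · obtain ⟨m, rfl⟩ := Int.eq_ofNat_of_zero_le hi
    exact step1 m (step2 (m + 2)) x hx y hy
  · obtain ⟨m, hm⟩ := Int.eq_ofNat_of_zero_le (neg_nonneg.2 hi)
    obtain rfl : i = -(m : ℤ) := by omega
    exact step2 m x hx y (by convert hy using 2; ring)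

theorem exists_preimage [FiniteDimensional ℂ H]
    {H' : Type*} [AddCommGroup H'] [Module ℂ H'] [FiniteDimensional ℂ H']
    (S : H →ₗ[ℂ] H' →ₗ[ℂ] ℂ) (hS : Nondeg S)
    {N : Module.End ℂ H} {N' : Module.End ℂ H'}
    (hNN' : ∀ (a : H) (b : H'), S (N a) b + S a (N' b) = 0) (k : ℕ) (y : H')
    (hy : ∀ x, (N ^ k) x = 0 → S x y = 0) : ∃ w, (N' ^ k) w = y := by
  have hinj : Function.Injective S.flip := by
    rw [injective_iff_map_eq_zero]
    exact fun a ha => hS.2 a fun x => by simpa using LinearMap.congr_fun ha x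
  have hinj' : Function.Injective S := by
    rw [injective_iff_map_eq_zero]
    exact fun a ha => hS.1 a fun x => by simpa using LinearMap.congr_fun ha x
  have h1 := LinearMap.finrank_le_finrank_of_injective hinj
  have h2 := LinearMap.finrank_le_finrank_of_injective hinj'
  have e1 : Module.finrank ℂ (H →ₗ[ℂ] ℂ) = Module.finrank ℂ H := Subspace.dual_finrank_eq
  have e2 : Module.finrank ℂ (H' →ₗ[ℂ] ℂ) = Module.finrank ℂ H' := Subspace.dual_finrank_eq
  have hsurj : Function.Surjective S.flip :=
    (LinearMap.injective_iff_surjective_of_finrank_eq_finrank (by omega)).1 hinj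
  have hmem : S.flip y ∈ LinearMap.range (N ^ k).dualMap := by
    rw [LinearMap.range_dualMap_eq_dualAnnihilator_ker, Submodule.mem_dualAnnihilator]
    intro x hx
    exact hy x hx
  obtain ⟨φ, hφ⟩ := hmem
  obtain ⟨w, rfl⟩ := hsurj φ
  refine ⟨(-1 : ℂ) ^ k • w, ?_⟩
  apply hinj
  ext x
  rw [← hφ]
  simp [S_pow S hNN']

theorem mem_of_ortho [FiniteDimensional ℂ H]
    {H' : Type*} [AddCommGroup H'] [Module ℂ H'] [FiniteDimensional ℂ H']
    (S : H →ₗ[ℂ] H' →ₗ[ℂ] ℂ) (hS : Nondeg S)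
    {N : Module.End ℂ H} {N' : Module.End ℂ H'}
    (hNN' : ∀ (a : H) (b : H'), S (N a) b + S a (N' b) = 0)
    {W : ℤ → Submodule ℂ H} {W' : ℤ → Submodule ℂ H'}
    (hW : IsWeightFiltration N W) (hW' : IsWeightFiltration N' W') (i : ℤ)
    {y : H'} (hy : ∀ x ∈ W i, S x y = 0) : y ∈ W' (-i - 1) := by
  have step : ∀ m : ℕ, ∀ y, (∀ x ∈ W (m : ℤ), S x y = 0) → y ∈ W' (-(m : ℤ) - 1) := by
    obtain ⟨b, hb⟩ := hW.eventually_top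
    intro m
    refine down_two
      (P := fun m : ℕ => ∀ y, (∀ x ∈ W (m : ℤ), S x y = 0) → y ∈ W' (-(m : ℤ) - 1))
      b.toNat ?_ ?_ m
    · intro m hm y hy
      rw [hS.2 y fun x => hy x (by rw [hb _ (by omega)]; trivial)]
      exact zero_mem _
    · intro m h y hy
      obtain ⟨w, rfl⟩ := exists_preimage S hS hNN' (m + 1) y (by
        intro x hx
        refine hy x ?_
        have := hW.mem_of_pow (m + 1) (x := x) (by rw [hx]; exact zero_mem _)
        convert this using 2; push_cast; ring)
      have h1 := h (N' ((N' ^ (m + 1)) w)) (by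
        intro x hx
        have e := hNN' x ((N' ^ (m + 1)) w)
        have hx' := hW.pow_mem 1 _ (m : ℤ) (by push_cast; omega) hx
        rw [pow_one] at hx'
        rw [hy _ hx', zero_add] at e
        exact e)
      rw [← Module.End.mul_apply, ← pow_succ'] at h1
      have h2 := hW'.mem_of_pow (m + 2) h1
      exact hW'.pow_mem (m + 1) _ _ (by push_cast; omega) h2
  rcases le_total 0 i with hi | hi
  · obtain ⟨m, rfl⟩ := Int.eq_ofNat_of_zero_le hi
    exact step m y hy
  · obtain ⟨m, hm⟩ := Int.eq_ofNat_of_zero_le (neg_nonneg.2 hi)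
    obtain rfl : i = -(m : ℤ) := by omega
    have h1 := step m ((N' ^ m) y) (by
      intro x hx
      have e := S_pow S hNN' m x y
      rw [hy _ (hW.pow_mem m _ _ (by omega) hx)] at e
      simpa using e.symm)
    have := hW'.mem_of_pow m h1
    convert this using 2; ring

end aux

/-- For infinitesimal automorphisms `(N, N')` of `(H, H', S)`, the
orthogonal complement of `W^N_i` with respect to `S` is `W^{N'}_{-i-1}`. -/
theorem weight_filtration_orthogonal [FiniteDimensional ℂ H]
    {H' : Type*} [AddCommGroup H'] [Module ℂ H'] [FiniteDimensional ℂ H']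
    (S : H →ₗ[ℂ] H' →ₗ[ℂ] ℂ) (hS : Nondeg S)
    {N : Module.End ℂ H} {N' : Module.End ℂ H'}
    (hN : IsNilpotent N) (hN' : IsNilpotent N')
    (hNN' : ∀ (a : H) (b : H'), S (N a) b + S a (N' b) = 0)
    {W : ℤ → Submodule ℂ H} {W' : ℤ → Submodule ℂ H'}
    (hW : IsWeightFiltration N W) (hW' : IsWeightFiltration N' W') (i : ℤ) :
    rightOrtho S (W i) = W' (-i - 1) := by
  ext y
  exact ⟨fun hy => mem_of_ortho S hS hNN' hW hW' i hy,
    fun hy x hx => pair_zero S hNN' hW hW' i hx hy⟩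

end Paper
end

section
/- Let (N, Ñ) be infinitesimal automorphisms of (H, H̃, S), with weight filtrations W^N, W^Ñ. Then Ker N ∩ (Ker Ñ)^⊥ = Ker N ∩ W^N_{−1}, where (Ker Ñ)^⊥ = {a ∈ H : S(a, b̃) = 0 for all b̃ ∈ Ker Ñ}. -/
namespace Paper

variable {H : Type*} [AddCommGroup H] [Module ℂ H]

theorem pow_map_le {N : Module.End ℂ H} {W : ℤ → Submodule ℂ H}
    (hW : IsWeightFiltration N W) (k : ℕ) :
    ∀ i : ℤ, W i ≤ Submodule.comap (N ^ k) (W (i - 2 * k)) := by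
  induction k with
  | zero => intro i x hx; simpa using hx
  | succ k ih =>
    intro i x hx
    have h1 := ih (i - 2) (hW.map_le i hx)
    rw [Submodule.mem_comap] at h1 ⊢
    rw [pow_succ, Module.End.mul_apply]
    have e : i - 2 * ((k + 1 : ℕ) : ℤ) = i - 2 - 2 * (k : ℤ) := by push_cast; ring
    rw [e]
    exact h1

theorem gr_bij {N : Module.End ℂ H} {W : ℤ → Submodule ℂ H}
    (hW : IsWeightFiltration N W) (i : ℕ) :
    (∀ x ∈ W (i : ℤ), (N ^ i) x ∈ W (-(i : ℤ) - 1) → x ∈ W ((i : ℤ) - 1)) ∧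
    (∀ x ∈ W (-(i : ℤ)), ∃ y ∈ W (i : ℤ), x - (N ^ i) y ∈ W (-(i : ℤ) - 1)) := by
  have h1 : W (i : ℤ) ≤ Submodule.comap (N ^ i) (W (-(i : ℤ))) := by
    have := pow_map_le hW i i
    have e : (i : ℤ) - 2 * i = -(i : ℤ) := by ring
    rwa [e] at this
  have h2 : W ((i : ℤ) - 1) ≤ Submodule.comap (N ^ i) (W (-(i : ℤ) - 1)) := by
    have := pow_map_le hW i ((i : ℤ) - 1)
    have e : (i : ℤ) - 1 - 2 * i = -(i : ℤ) - 1 := by ring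
    rwa [e] at this
  obtain ⟨hinj, hsurj⟩ := hW.gr_bijective i h1 h2
  constructor
  · intro x hx hNx
    have h0 : inducedQuot (N ^ i) _ _ _ _ h1 h2 (Submodule.Quotient.mk ⟨x, hx⟩) = 0 := by
      unfold inducedQuot
      rw [Submodule.mapQ_apply, Submodule.Quotient.mk_eq_zero]
      exact hNx
    have h3 := hinj (h0.trans (map_zero _).symm)
    rw [Submodule.Quotient.mk_eq_zero] at h3
    exact h3
  · intro x hx
    obtain ⟨q, hq⟩ := hsurj (Submodule.Quotient.mk ⟨x, hx⟩)
    obtain ⟨y, rfl⟩ := Submodule.Quotient.mk_surjective _ q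
    refine ⟨y, y.2, ?_⟩
    unfold inducedQuot at hq
    rw [Submodule.mapQ_apply] at hq
    have h3 := (Submodule.Quotient.eq _).1 hq.symm
    exact h3

theorem W_neg_le_range {N : Module.End ℂ H} {W : ℤ → Submodule ℂ H}
    (hW : IsWeightFiltration N W) : W (-1) ≤ LinearMap.range N := by
  obtain ⟨a, ha⟩ := hW.eventually_bot
  have key : ∀ n i : ℕ, -((i : ℤ) + 1) ≤ a + n → W (-((i : ℤ) + 1)) ≤ LinearMap.range N := by
    intro n
    induction n with
    | zero =>
      intro i hi
      rw [ha _ (by simpa using hi)]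
      exact bot_le
    | succ n ih =>
      intro i hi x hx
      obtain ⟨y, -, hy⟩ := (gr_bij hW (i + 1)).2 x (by push_cast; exact hx)
      have h1 := ih (i + 1) (by push_cast at hi ⊢; linarith) (x := x - (N ^ (i + 1)) y) (by
        have e : -(((i + 1 : ℕ) : ℤ) + 1) = -((i + 1 : ℕ) : ℤ) - 1 := by ring
        rw [e]; exact hy)
      have h2 : (N ^ (i + 1)) y ∈ LinearMap.range N := ⟨(N ^ i) y, by
        rw [pow_succ', Module.End.mul_apply]⟩
      simpa using add_mem h1 h2
  have := key (-1 - a).toNat 0 (by have := Int.self_le_toNat (-1 - a); push_cast; linarith)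
  simpa using this

theorem mem_W_one {N : Module.End ℂ H} {W : ℤ → Submodule ℂ H}
    (hW : IsWeightFiltration N W) (y : H) (hy : N (N y) = 0) : y ∈ W 1 := by
  obtain ⟨b, hb⟩ := hW.eventually_top
  have key : ∀ n : ℕ, y ∈ W ((n : ℤ) + 1) → y ∈ W 1 := by
    intro n
    induction n with
    | zero => intro h; simpa using h
    | succ n ih =>
      intro h
      apply ih
      have h1 := (gr_bij hW (n + 2)).1 y (by
        have e : ((n + 2 : ℕ) : ℤ) = ((n + 1 : ℕ) : ℤ) + 1 := by push_cast; ring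
        rw [e]; exact h) (by
        have e : (N ^ (n + 2)) y = 0 := by
          rw [pow_add, Module.End.mul_apply, pow_two, Module.End.mul_apply, hy, map_zero]
        rw [e]; exact zero_mem _)
      have e : ((n + 2 : ℕ) : ℤ) - 1 = (n : ℤ) + 1 := by push_cast; ring
      rwa [e] at h1
  apply key b.toNat
  rw [hb _ (by have := Int.self_le_toNat b; linarith)]
  trivial

theorem leftOrtho_ker {H' : Type*} [FiniteDimensional ℂ H] [AddCommGroup H'] [Module ℂ H']
    [FiniteDimensional ℂ H'] (S : H →ₗ[ℂ] H' →ₗ[ℂ] ℂ) (hS : Nondeg S)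
    {N : Module.End ℂ H} {N' : Module.End ℂ H'}
    (hNN' : ∀ (a : H) (b : H'), S (N a) b + S a (N' b) = 0) :
    leftOrtho S (LinearMap.ker N') = LinearMap.range N := by
  apply le_antisymm
  · intro x hx
    by_contra hxN
    obtain ⟨f, hfx, hf⟩ := Submodule.exists_le_ker_of_notMem hxN
    have i1 : Function.Injective S := by
      rw [injective_iff_map_eq_zero]
      intro a ha
      exact hS.1 a fun y => by simp [ha]
    have i2 : Function.Injective S.flip := by
      rw [injective_iff_map_eq_zero]
      intro a ha
      exact hS.2 a fun y => by simpa using LinearMap.congr_fun ha y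
    have hP : S.IsPerfPair := LinearMap.IsPerfPair.of_injective i1 i2
    obtain ⟨y, rfl⟩ := hP.bijective_right.2 f
    apply hfx
    refine hx y ?_
    rw [LinearMap.mem_ker]
    apply hS.2
    intro a
    have h1 : S (N a) y = 0 := hf (LinearMap.mem_range_self N a)
    have h2 := hNN' a y
    rwa [h1, zero_add] at h2
  · rintro _ ⟨a, rfl⟩ y hy
    have h2 := hNN' a y
    rw [LinearMap.mem_ker] at hy
    simpa [hy] using h2

/-- For infinitesimal automorphisms `(N, N')` of `(H, H', S)`:
`Ker N ∩ (Ker N')^⊥ = Ker N ∩ W^N_{-1}`. -/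
theorem ker_inf_ortho_ker_eq [FiniteDimensional ℂ H]
    {H' : Type*} [AddCommGroup H'] [Module ℂ H'] [FiniteDimensional ℂ H']
    (S : H →ₗ[ℂ] H' →ₗ[ℂ] ℂ) (hS : Nondeg S)
    {N : Module.End ℂ H} {N' : Module.End ℂ H'}
    (hN : IsNilpotent N) (hN' : IsNilpotent N')
    (hNN' : ∀ (a : H) (b : H'), S (N a) b + S a (N' b) = 0)
    {W : ℤ → Submodule ℂ H} {W' : ℤ → Submodule ℂ H'}
    (hW : IsWeightFiltration N W) (hW' : IsWeightFiltration N' W') :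
    LinearMap.ker N ⊓ leftOrtho S (LinearMap.ker N') = LinearMap.ker N ⊓ W (-1) := by
  rw [leftOrtho_ker S hS hNN']
  apply le_antisymm
  · rintro x ⟨hx, y, rfl⟩
    refine ⟨hx, ?_⟩
    have h1 := hW.map_le 1 (mem_W_one hW y hx)
    simpa using h1
  · exact inf_le_inf_left _ (W_neg_le_range hW)

end Paper
end
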